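/- If (T, v) is a rooted tree on t vertices and (G, w) is a connected graph with a root vertex w and pathwidth at least 2t − 2, then (G, w) contains (T, v) as a rooted minor, i.e., there is a model of T in G whose branch set for v contains w. -/

import Mathlib

open SimpleGraph Set

/-- `H` is a minor of `G`: there is a model of `H` in `G` given by pairwise disjoint
branch sets, each inducing a connected subgraph, with edges of `H` realized by edges of `G`. -/
def HasMinor {V W : Type*} (G : SimpleGraph V) (H : SimpleGraph W) : Prop :=
  ∃ f : W → Set V,
    (∀ w, ((G.induce (f w)).Connected)) ∧
    (Pairwise fun w w' => Disjoint (f w) (f w')) ∧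
    ∀ ⦃w w'⦄, H.Adj w w' → ∃ a ∈ f w, ∃ b ∈ f w', G.Adj a b

/-- A path decomposition of the part of `G` inside the vertex set `A`, with bags `B 0, …, B (p-1)`. -/
def IsPathDecompOn {V : Type*} (G : SimpleGraph V) (A : Set V) (p : ℕ) (B : Fin p → Set V) : Prop :=
  (∀ i, B i ⊆ A) ∧
  (∀ v ∈ A, ∃ i, v ∈ B i) ∧
  (∀ ⦃u v⦄, G.Adj u v → u ∈ A → v ∈ A → ∃ i, u ∈ B i ∧ v ∈ B i) ∧
  (∀ v (i j l : Fin p), i ≤ j → j ≤ l → v ∈ B i → v ∈ B l → v ∈ B j)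

/-- The pathwidth of `G`: the least `t` such that `G` has a path decomposition of width `t`. -/
noncomputable def pathwidth {V : Type*} (G : SimpleGraph V) : ℕ :=
  sInf {t | ∃ p, ∃ B : Fin p → Set V, IsPathDecompOn G Set.univ p B ∧ ∀ i, (B i).ncard ≤ t + 1}

/-- Vertices of the complete binary tree of height `h`: binary strings of length at most `h`. -/
def cbtVert (h : ℕ) : Type := {l : List Bool // l.length ≤ h}

/-- The complete binary tree of height `h`, with a vertex adjacent to its two children
obtained by prepending a bit. -/
def completeBinaryTree (h : ℕ) : SimpleGraph (cbtVert h) :=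
  SimpleGraph.fromRel fun a b => ∃ x : Bool, b.1 = x :: a.1

/-- The root (empty string) of the complete binary tree of height `h`. -/
def cbtRoot (h : ℕ) : cbtVert h := ⟨[], Nat.zero_le h⟩

/-- `(H, rH)` is a rooted minor of `(G, rG)`: a minor model of `H` in `G` whose branch set
for the root `rH` contains the root `rG`. -/
def HasRootedMinor {V W : Type*} (G : SimpleGraph V) (rG : V) (H : SimpleGraph W) (rH : W) :
    Prop :=
  ∃ f : W → Set V, rG ∈ f rH ∧
    (∀ w, ((G.induce (f w)).Connected)) ∧
    (Pairwise fun w w' => Disjoint (f w) (f w')) ∧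
    ∀ ⦃w w'⦄, H.Adj w w' → ∃ a ∈ f w, ∃ b ∈ f w', G.Adj a b


/-!
Grow a vertex set `X` of `G` together with a path decomposition of `G[X]` into bags of size at
most `N` whose last bag contains the boundary of `X` (following Diestel's proof of the theorem of
Bienstock, Robertson, Seymour and Thomas). If `X` is maximal with boundary of size at most
`m < N`, then adding any vertex `y` makes the boundary grow by exactly `y`, and by Menger's theorem
`X ∪ {y}` is linked to the next maximal set, of boundary `m + 1`: a set in between with a smaller
boundary would inherit a path decomposition along the linkage and contradict maximality. Hence a
partial model of a forest, all of whose branch sets meet the boundary of `X`, can be extended by a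
leaf placed at a suitable `y` and pushed along the linkage to the next boundary. When the pathwidth
of `G` is at least `N`, the sets `X` never exhaust `G`, so `G` contains every forest on `N + 1`
vertices.

For the rooted version, glue two copies of `T` at `v`; this tree has `2t - 1` vertices, hence is a
minor of `G`. A shortest path from `w` to its branch sets meets them in one vertex, lying in one of
the two copies. Path and copy together become the branch set of `v`, and the other copy supplies the
remaining branch sets.
-/

section ConnectedUnions

variable {V ι : Type*} {G : SimpleGraph V}

lemma connected_induce_singleton (G : SimpleGraph V) (x : V) : (G.induce {x}).Connected := by
  rw [induce_singleton_eq_top]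
  exact connected_top

lemma connected_induce_iUnion {H : SimpleGraph ι} {P : ι → Set V} (hH : H.Connected)
    (hP : ∀ i, (G.induce (P i)).Connected)
    (hadj : ∀ ⦃i j⦄, H.Adj i j → ∃ a ∈ P i, ∃ b ∈ P j, G.Adj a b) :
    (G.induce (⋃ i, P i)).Connected := by
  have patch {i j : ι} (q : H.Walk i j) :
      ∃ s ⊆ ⋃ k, P k, P i ⊆ s ∧ P j ⊆ s ∧ (G.induce s).Connected := by
    induction q with
    | nil => exact ⟨P _, subset_iUnion P _, subset_rfl, subset_rfl, hP _⟩
    | @cons i _ _ hik _ ih =>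
      obtain ⟨s, hs, hks, hjs, hconn⟩ := ih
      obtain ⟨a, ha, b, hb, hab⟩ := hadj hik
      exact ⟨P i ∪ s, union_subset (subset_iUnion P i) hs, subset_union_left,
        hjs.trans subset_union_right,
        connected_induce_union (hP i).preconnected hconn.preconnected ha (hks hb) hab⟩
  obtain ⟨i⟩ := hH.nonempty
  obtain ⟨⟨x, hx⟩⟩ := (hP i).nonempty
  refine induce_connected_of_patches x (mem_iUnion_of_mem i hx) fun {y} hy => ?_
  obtain ⟨j, hyj⟩ := mem_iUnion.1 hy
  obtain ⟨q⟩ := hH.preconnected i j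
  obtain ⟨s, hs, his, hjs, hconn⟩ := patch q
  exact ⟨s, hs, his hx, hjs hyj, hconn.preconnected _ _⟩

lemma connected_induce_biUnion {A : Set V} {P : V → Set V} (hA : (G.induce A).Connected)
    (hmem : ∀ x ∈ A, x ∈ P x) (hP : ∀ x ∈ A, (G.induce (P x)).Connected) :
    (G.induce (⋃ x ∈ A, P x)).Connected := by
  rw [biUnion_eq_iUnion]
  exact connected_induce_iUnion hA (fun x => hP x x.2)
    fun x y hxy => ⟨x, hmem x x.2, y, hmem y y.2, hxy⟩

lemma exists_connected_induce_inter_eq_singleton (hG : G.Connected) (w : V) {M : Set V}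
    (hM : M.Nonempty) : ∃ P, w ∈ P ∧ (G.induce P).Connected ∧ ∃ z, P ∩ M = {z} := by
  classical
  obtain ⟨z, hz, hmin⟩ := exists_minimalFor_of_wellFoundedLT (· ∈ M) (G.dist w) hM
  obtain ⟨p, hp⟩ := hG.exists_walk_length_eq_dist w z
  refine ⟨{x | x ∈ p.support}, p.start_mem_support, p.connected_induce_support, z, ?_⟩
  refine Subset.antisymm ?_ (singleton_subset_iff.2 ⟨p.end_mem_support, hz⟩)
  rintro x ⟨hxp, hxM⟩
  by_contra hxz
  have hlt := p.length_takeUntil_lt_length hxp hxz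
  have hle := dist_le (p.takeUntil x hxp)
  have := hmin hxM
  omega

end ConnectedUnions

section Models

variable {V U U' : Type*} {G : SimpleGraph V} {H : SimpleGraph U} {S : Set U} {f : U → Set V}

/-- `f` restricts to a model in `G` of the subgraph of `H` induced by `S`. The branch sets are
indexed by all of `U` so that partial models can be extended by `Function.update`. -/
structure IsModelOn (G : SimpleGraph V) (H : SimpleGraph U) (S : Set U) (f : U → Set V) :
    Prop where
  connected : ∀ u ∈ S, (G.induce (f u)).Connected
  disjoint : S.PairwiseDisjoint f
  adj : ∀ u ∈ S, ∀ u' ∈ S, H.Adj u u' → ∃ a ∈ f u, ∃ b ∈ f u', G.Adj a b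

lemma hasMinor_iff_exists_isModelOn_univ : HasMinor G H ↔ ∃ f, IsModelOn G H univ f := by
  constructor
  · rintro ⟨f, hconn, hdisj, hadj⟩
    exact ⟨f, fun u _ => hconn u, pairwise_univ.2 hdisj, fun _ _ _ _ h => hadj h⟩
  · rintro ⟨f, hf⟩
    exact ⟨f, fun u => hf.connected u trivial, pairwise_univ.1 hf.disjoint,
      fun u u' h => hf.adj u trivial u' trivial h⟩

lemma IsModelOn.mono {R : Set U} (hf : IsModelOn G H S f) (hR : R ⊆ S) : IsModelOn G H R f where
  connected u hu := hf.connected u (hR hu)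
  disjoint := hf.disjoint.subset hR
  adj u hu u' hu' := hf.adj u (hR hu) u' (hR hu')

lemma IsModelOn.comp {H' : SimpleGraph U'} (hf : IsModelOn G H univ f) (φ : Copy H' H) :
    IsModelOn G H' univ (f ∘ φ) where
  connected u _ := hf.connected (φ u) trivial
  disjoint _ _ _ _ hne := hf.disjoint trivial trivial (φ.injective.ne hne)
  adj _ _ _ _ h := hf.adj _ trivial _ trivial (φ.toHom.map_adj h)

lemma IsModelOn.connected_induce_iUnion (hf : IsModelOn G H univ f) (hH : H.Connected) :
    (G.induce (⋃ u, f u)).Connected :=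
  _root_.connected_induce_iUnion hH (fun u => hf.connected u trivial)
    fun u u' h => hf.adj u trivial u' trivial h

lemma IsModelOn.insert_update [DecidableEq U] (hf : IsModelOn G H S f) {u : U} (hu : u ∉ S)
    {R : Set V} (hR : (G.induce R).Connected) (hdisj : ∀ q ∈ S, Disjoint (f q) R)
    (hadj : ∀ q ∈ S, H.Adj q u → ∃ a ∈ f q, ∃ b ∈ R, G.Adj a b) :
    IsModelOn G H (insert u S) (Function.update f u R) := by
  have hself : Function.update f u R u = R := Function.update_self ..
  have hS : ∀ q ∈ S, Function.update f u R q = f q := fun q hq =>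
    Function.update_of_ne (ne_of_mem_of_not_mem hq hu) ..
  refine ⟨?_, (pairwiseDisjoint_insert_of_notMem hu).2 ⟨?_, ?_⟩, ?_⟩
  · rintro q (rfl | hq)
    · rwa [hself]
    · rw [hS q hq]
      exact hf.connected q hq
  · intro q hq q' hq' hne
    simpa only [Function.onFun, hS q hq, hS q' hq'] using hf.disjoint hq hq' hne
  · intro q hq
    rw [hself, hS q hq]
    exact (hdisj q hq).symm
  · rintro q (rfl | hq) q' (rfl | hq') h
    · exact absurd h H.irrefl
    · rw [hself, hS q' hq']
      obtain ⟨a, ha, b, hb, hab⟩ := hadj q' hq' h.symm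
      exact ⟨b, hb, a, ha, hab.symm⟩
    · rw [hself, hS q hq]
      exact hadj q hq h
    · rw [hS q hq, hS q' hq']
      exact hf.adj q hq q' hq' h

end Models

section Linkages

variable {V U : Type*} {G G' : SimpleGraph V} {X Y Z : Set V} {a u : V}

/-- The set of vertices of `X` with a neighbour outside `X`. -/
def vertexBoundary (G : SimpleGraph V) (X : Set V) : Set V := {x ∈ X | ∃ y ∉ X, G.Adj x y}

lemma vertexBoundary_subset : vertexBoundary G X ⊆ X := fun _ hx => hx.1

lemma vertexBoundary_mono_graph (h : G' ≤ G) : vertexBoundary G' X ⊆ vertexBoundary G X :=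
  fun _ ⟨hx, y, hy, hxy⟩ => ⟨hx, y, hy, h hxy⟩

lemma vertexBoundary_insert_subset (G : SimpleGraph V) (X : Set V) (u : V) :
    vertexBoundary G (insert u X) ⊆ insert u (vertexBoundary G X) := by
  rintro x ⟨rfl | hx, y, hy, hxy⟩
  · exact mem_insert x _
  · exact mem_insert_of_mem _ ⟨hx, y, fun h => hy (mem_insert_of_mem _ h), hxy⟩

lemma vertexBoundary_insert_subset_of_forall_adj (ha : a ∈ X)
    (hau : ∀ y ∉ X, G.Adj a y → y = u) :
    vertexBoundary G (insert u X) ⊆ insert u (vertexBoundary G X \ {a}) := by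
  intro x hx
  refine (vertexBoundary_insert_subset G X u hx).imp_right fun hxX => ⟨hxX, ?_⟩
  rintro rfl
  obtain ⟨_, y, hy, hxy⟩ := hx
  rw [mem_insert_iff, not_or] at hy
  exact hy.1 (hau y hy.2 hxy)

lemma ncard_insert_vertexBoundary_sdiff [Finite V] (ha : a ∈ vertexBoundary G X) (hu : u ∉ X) :
    (insert u (vertexBoundary G X \ {a})).ncard = (vertexBoundary G X).ncard := by
  rw [ncard_insert_of_notMem fun h => hu (vertexBoundary_subset h.1),
    ncard_sdiff_singleton_add_one ha]

lemma vertexBoundary_subset_insert_deleteEdges (ha : a ∈ X) :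
    vertexBoundary G X ⊆ insert a (vertexBoundary (G.deleteEdges {s(a, u)}) X) := by
  rintro x ⟨hx, y, hy, hxy⟩
  have hya : y ≠ a := fun h => hy (h ▸ ha)
  by_cases hxa : x = a
  · exact Or.inl hxa
  · refine Or.inr ⟨hx, y, hy, ?_⟩
    simp [deleteEdges_adj, hxy, hxa, hya]

lemma vertexBoundary_deleteEdges_of_mem (ha : a ∈ X) (hu : u ∈ X) :
    vertexBoundary (G.deleteEdges {s(a, u)}) X = vertexBoundary G X := by
  refine (vertexBoundary_mono_graph (deleteEdges_le _)).antisymm ?_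
  rintro x ⟨hx, y, hy, hxy⟩
  have hya : y ≠ a := fun h => hy (h ▸ ha)
  have hyu : y ≠ u := fun h => hy (h ▸ hu)
  exact ⟨hx, y, hy, by simp [deleteEdges_adj, hxy, hya, hyu]⟩

lemma vertexBoundary_deleteEdges_of_adj {y : V} (ha : a ∈ X) (hy : y ∉ X) (hyu : y ≠ u)
    (hay : G.Adj a y) :
    vertexBoundary (G.deleteEdges {s(a, u)}) X = vertexBoundary G X := by
  refine (vertexBoundary_mono_graph (deleteEdges_le _)).antisymm ?_
  have hya : y ≠ a := fun h => hy (h ▸ ha)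
  have ha' : a ∈ vertexBoundary (G.deleteEdges {s(a, u)}) X :=
    ⟨ha, y, hy, by simp [deleteEdges_adj, hay, hya, hyu]⟩
  exact (vertexBoundary_subset_insert_deleteEdges ha).trans (insert_subset ha' subset_rfl)

lemma ncard_vertexBoundary_le_deleteEdges_add_one [Finite V] (ha : a ∈ X) :
    (vertexBoundary G X).ncard ≤ (vertexBoundary (G.deleteEdges {s(a, u)}) X).ncard + 1 :=
  (ncard_le_ncard (vertexBoundary_subset_insert_deleteEdges ha)).trans (ncard_insert_le _ _)

lemma ncard_vertexBoundary_deleteEdges_le_of_forall_lt [Finite V] (hXY : X ⊆ Y) (ha : a ∈ X)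
    (hu : u ∈ Y) (hX : vertexBoundary (G.deleteEdges {s(a, u)}) X = vertexBoundary G X)
    (hle : (vertexBoundary G X).ncard ≤ (vertexBoundary G Y).ncard)
    (hlt : ∀ Z, X ⊂ Z → Z ⊂ Y → (vertexBoundary G X).ncard < (vertexBoundary G Z).ncard)
    (Z : Set V) (hXZ : X ⊆ Z) (hZY : Z ⊆ Y) :
    (vertexBoundary (G.deleteEdges {s(a, u)}) X).ncard ≤
      (vertexBoundary (G.deleteEdges {s(a, u)}) Z).ncard := by
  obtain rfl | hXZ' := hXZ.eq_or_ssubset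
  · rfl
  rw [hX]
  obtain rfl | hZY' := hZY.eq_or_ssubset
  · rwa [vertexBoundary_deleteEdges_of_mem (hXY ha) hu]
  · exact Nat.le_of_lt_succ ((hlt Z hXZ' hZY').trans_le
      (ncard_vertexBoundary_le_deleteEdges_add_one (hXZ ha)))

/-- Disjoint connected subgraphs `P x` of `G[Y]`, one containing each `x ∈ X`, such that those
starting on the boundary of `X` reach the boundary of `Y`. Up to shrinking, this is a linkage of
disjoint paths; connected sets compose more easily. Disjointness forces `P x ∩ X = {x}`. -/
structure IsLinkage (G : SimpleGraph V) (X Y : Set V) (P : V → Set V) : Prop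
    extends IsModelOn G (⊥ : SimpleGraph V) X P where
  mem : ∀ x ∈ X, x ∈ P x
  subset : ∀ x ∈ X, P x ⊆ Y
  boundary : ∀ x ∈ vertexBoundary G X, (P x ∩ vertexBoundary G Y).Nonempty

/-- `X` is joined to `Y` by a linkage. -/
def Linked (G : SimpleGraph V) (X Y : Set V) : Prop := ∃ P, IsLinkage G X Y P

lemma IsModelOn.biUnion {H : SimpleGraph U} {S : Set U} {f : U → Set V} {P : V → Set V}
    (hf : IsModelOn G H S f) (hP : IsLinkage G X Y P) (hfX : ∀ q ∈ S, f q ⊆ X) :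
    IsModelOn G H S fun q => ⋃ x ∈ f q, P x where
  connected q hq := connected_induce_biUnion (hf.connected q hq)
    (fun x hx => hP.mem x (hfX q hq hx)) fun x hx => hP.connected x (hfX q hq hx)
  disjoint q hq q' hq' hne := by
    refine Set.disjoint_left.2 fun z hz hz' => hne ?_
    obtain ⟨x, hx, hzx⟩ := mem_iUnion₂.1 hz
    obtain ⟨x', hx', hzx'⟩ := mem_iUnion₂.1 hz'
    obtain rfl := hP.disjoint.elim_set (hfX q hq hx) (hfX q' hq' hx') z hzx hzx'
    exact hf.disjoint.elim_set hq hq' x hx hx'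
  adj q hq q' hq' h := by
    obtain ⟨a, ha, b, hb, hab⟩ := hf.adj q hq q' hq' h
    exact ⟨a, mem_biUnion ha (hP.mem a (hfX q hq ha)), b,
      mem_biUnion hb (hP.mem b (hfX q' hq' hb)), hab⟩

lemma isModelOn_bot_singleton (G : SimpleGraph V) (X : Set V) :
    IsModelOn G (⊥ : SimpleGraph V) X singleton where
  connected x _ := connected_induce_singleton G x
  disjoint _ _ _ _ hne := disjoint_singleton.2 hne
  adj _ _ _ _ h := h.elim

lemma linked_of_subset (h : X ⊆ Y) (hb : vertexBoundary G X ⊆ vertexBoundary G Y) :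
    Linked G X Y := by
  exact ⟨singleton, isModelOn_bot_singleton G X, fun x _ => rfl,
    fun x hx => singleton_subset_iff.2 (h hx), fun x hx => ⟨x, rfl, hb hx⟩⟩

lemma Linked.trans (hXZ : Linked G X Z) (hZY : Linked G Z Y) : Linked G X Y := by
  obtain ⟨P, hP⟩ := hXZ
  obtain ⟨Q, hQ⟩ := hZY
  refine ⟨fun x => ⋃ z ∈ P x, Q z, hP.toIsModelOn.biUnion hQ hP.subset, ?_, ?_, ?_⟩
  · exact fun x hx => mem_biUnion (hP.mem x hx) (hQ.mem x (hP.subset x hx (hP.mem x hx)))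
  · exact fun x hx => iUnion₂_subset fun z hz => hQ.subset z (hP.subset x hx hz)
  · intro x hx
    obtain ⟨z, hzP, hz⟩ := hP.boundary x hx
    obtain ⟨y, hyQ, hy⟩ := hQ.boundary z hz
    exact ⟨y, mem_biUnion hzP hyQ, hy⟩

lemma Linked.mono_graph (h : Linked G' X Y) (hG : G' ≤ G)
    (hX : vertexBoundary G X ⊆ vertexBoundary G' X) : Linked G X Y := by
  obtain ⟨P, hP⟩ := h
  exact ⟨P, ⟨fun x hx => (hP.connected x hx).mono fun _ _ h => hG h, hP.disjoint,
    fun _ _ _ _ h => h.elim⟩, hP.mem, hP.subset, fun x hx => (hP.boundary x (hX hx)).mono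
      (inter_subset_inter_right _ (vertexBoundary_mono_graph hG))⟩

lemma linked_insert [Finite V] (ha : a ∈ X) (hu : u ∉ X) (hau : G.Adj a u)
    (hnbr : ∀ y ∉ X, G.Adj a y → y = u)
    (hle : (vertexBoundary G X).ncard ≤ (vertexBoundary G (insert u X)).ncard) :
    Linked G X (insert u X) := by
  classical
  have haX : a ∈ vertexBoundary G X := ⟨ha, u, hu, hau⟩
  have hbd : vertexBoundary G (insert u X) = insert u (vertexBoundary G X \ {a}) :=
    eq_of_subset_of_ncard_le (vertexBoundary_insert_subset_of_forall_adj ha hnbr)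
      ((ncard_insert_vertexBoundary_sdiff haX hu).trans_le hle)
  have hmodel : IsModelOn G (⊥ : SimpleGraph V) (insert a (X \ {a}))
      (Function.update singleton a {a, u}) := by
    refine (isModelOn_bot_singleton G (X \ {a})).insert_update (by simp)
      (induce_pair_connected_of_adj hau) ?_ fun _ _ h => h.elim
    rintro x ⟨hx, hxa⟩
    simpa [eq_comm] using And.intro hxa (ne_of_mem_of_not_mem hx hu)
  rw [insert_sdiff_self_of_mem ha] at hmodel
  refine ⟨_, hmodel, fun x _ => ?_, fun x hx => ?_, fun x hx => ?_⟩
  · obtain rfl | hxa := eq_or_ne x a <;> simp [*]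
  · obtain rfl | hxa := eq_or_ne x a
    · simp [insert_subset_iff, hx]
    · simp [hxa, hx]
  · rw [hbd]
    obtain rfl | hxa := eq_or_ne x a
    · exact ⟨u, by simp⟩
    · exact ⟨x, by simp [hxa, hx]⟩

lemma ncard_sdiff_lt_ncard_sdiff [Finite V] {X X' Y Y' : Set V} {x : V} (hX : X ⊆ X')
    (hY : Y' ⊆ Y) (hx : x ∈ Y \ X) (hx' : x ∉ Y' \ X') : (Y' \ X').ncard < (Y \ X).ncard :=
  ncard_lt_ncard ((sdiff_subset_sdiff hY hX).ssubset_of_mem_notMem hx hx')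

theorem linked_of_forall_ncard_vertexBoundary_le [Finite V] (G : SimpleGraph V) {X Y : Set V}
    (hXY : X ⊆ Y)
    (hmin : ∀ Z, X ⊆ Z → Z ⊆ Y → (vertexBoundary G X).ncard ≤ (vertexBoundary G Z).ncard) :
    Linked G X Y := by
  by_cases htight : ∃ Z, X ⊂ Z ∧ Z ⊂ Y ∧ (vertexBoundary G Z).ncard ≤ (vertexBoundary G X).ncard
  · -- A further minimum splits the problem into two smaller ones.
    obtain ⟨Z, hXZ, hZY, hle⟩ := htight
    exact (linked_of_forall_ncard_vertexBoundary_le G hXZ.subset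
        fun W hXW hWZ => hmin W hXW (hWZ.trans hZY.subset)).trans
      (linked_of_forall_ncard_vertexBoundary_le G hZY.subset
        fun W hZW hWY => hle.trans (hmin W (hXZ.subset.trans hZW) hWY))
  push Not at htight
  by_cases hcross : ∃ a ∈ X, ∃ u ∈ Y \ X, G.Adj a u
  swap
  · push Not at hcross
    exact linked_of_subset hXY fun x ⟨hx, y, hy, hxy⟩ =>
      ⟨hXY hx, y, fun hyY => hcross x hx y ⟨hyY, hy⟩ hxy, hxy⟩
  obtain ⟨a, ha, u, ⟨huY, huX⟩, hau⟩ := hcross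
  by_cases hother : ∃ y ∉ X, G.Adj a y ∧ y ≠ u
  · -- Deleting `au` costs at most one boundary vertex, and strictness pays for it.
    obtain ⟨y, hyX, hay, hyu⟩ := hother
    have hbX := vertexBoundary_deleteEdges_of_adj ha hyX hyu hay
    exact (linked_of_forall_ncard_vertexBoundary_le (G.deleteEdges {s(a, u)}) hXY
      (ncard_vertexBoundary_deleteEdges_le_of_forall_lt hXY ha huY hbX (hmin Y hXY subset_rfl)
        htight)).mono_graph (deleteEdges_le _) hbX.ge
  · -- Absorbing `u` exchanges `a` for `u` in the boundary, so `au` can start the linkage.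
    push Not at hother
    have hu : insert u X ⊆ Y := insert_subset huY hXY
    have hle := ncard_le_ncard (vertexBoundary_insert_subset_of_forall_adj ha hother)
    rw [ncard_insert_vertexBoundary_sdiff ⟨ha, u, huX, hau⟩ huX] at hle
    exact (linked_insert ha huX hau hother (hmin _ (subset_insert u X) hu)).trans
      (linked_of_forall_ncard_vertexBoundary_le G hu
        fun W hXW hWY => hle.trans (hmin W ((subset_insert u X).trans hXW) hWY))
termination_by G.edgeSet.ncard + (Y \ X).ncard
decreasing_by
  · obtain ⟨y, hyY, hyZ⟩ := exists_of_ssubset hZY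
    gcongr
    exact ncard_sdiff_lt_ncard_sdiff subset_rfl hZY.subset
      ⟨hyY, fun hyX => hyZ (hXZ.subset hyX)⟩ fun h => hyZ h.1
  · obtain ⟨y, hyZ, hyX⟩ := exists_of_ssubset hXZ
    gcongr
    exact ncard_sdiff_lt_ncard_sdiff hXZ.subset subset_rfl ⟨hZY.subset hyZ, hyX⟩ fun h => h.2 hyZ
  · gcongr
    rw [edgeSet_deleteEdges]
    exact ncard_lt_ncard (sdiff_ssubset_left_iff.2 ⟨s(a, u), hau, rfl⟩)
  · gcongr
    exact ncard_sdiff_lt_ncard_sdiff (subset_insert u X) subset_rfl ⟨huY, huX⟩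
      fun h => h.2 (mem_insert u X)

end Linkages

section Sweeps

variable {V : Type*} {G : SimpleGraph V} {N : ℕ} {X Y : Set V} {y : V}

lemma IsPathDecompOn.inter_nonempty_of_connected {p : ℕ} {B : Fin p → Set V}
    (hB : IsPathDecompOn G Y p B) {C : Set V} (hC : (G.induce C).Connected) (hCY : C ⊆ Y)
    {i j l : Fin p} (hij : i ≤ j) (hjl : j ≤ l) (hi : (C ∩ B i).Nonempty)
    (hl : (C ∩ B l).Nonempty) : (C ∩ B j).Nonempty := by
  obtain ⟨-, -, hedge, hconv⟩ := hB
  obtain ⟨x, hxC, hxi⟩ := hi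
  obtain ⟨z, hzC, hzl⟩ := hl
  by_contra hempty
  have hCj : ∀ c ∈ C, c ∉ B j := fun c hc hcj => hempty ⟨c, hc, hcj⟩
  obtain ⟨q⟩ := hC.preconnected ⟨x, hxC⟩ ⟨z, hzC⟩
  obtain ⟨⟨⟨a, b⟩, hab⟩, -, ⟨k, hkj, hak⟩, hb⟩ :=
    q.exists_boundary_dart {c | ∃ k ≤ j, c.1 ∈ B k} ⟨i, hij, hxi⟩
      fun ⟨k, hkj, hzk⟩ => hCj z hzC (hconv z k j l hkj hjl hzk hzl)
  obtain ⟨m, ham, hbm⟩ := hedge hab (hCY a.2) (hCY b.2)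
  have hjm : j ≤ m := (not_le.1 fun hmj => hb ⟨m, hmj, hbm⟩).le
  exact hCj a a.2 (hconv a k j m hkj hjm hak ham)

lemma IsPathDecompOn.snoc {p : ℕ} {B : Fin (p + 1) → Set V} (hB : IsPathDecompOn G X (p + 1) B)
    (hy : y ∉ X) (hlast : vertexBoundary G X ⊆ B (Fin.last p)) :
    IsPathDecompOn G (insert y X) (p + 2)
      (Fin.snoc (α := fun _ => Set V) B (insert y (vertexBoundary G X))) := by
  obtain ⟨hsub, hcover, hedge, hconv⟩ := hB
  refine ⟨fun i => ?_, ?_, ?_, ?_⟩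
  · cases i using Fin.lastCases with
    | last => simpa only [Fin.snoc_last] using insert_subset_insert vertexBoundary_subset
    | cast i => simpa only [Fin.snoc_castSucc] using (hsub i).trans (subset_insert y X)
  · rintro x (rfl | hx)
    · exact ⟨Fin.last _, by simp⟩
    · obtain ⟨i, hi⟩ := hcover x hx
      exact ⟨i.castSucc, by simpa using hi⟩
  · rintro x z hxz (rfl | hx) (rfl | hz)
    · exact absurd hxz G.irrefl
    · have hz' : z ∈ vertexBoundary G X := ⟨hz, x, hy, hxz.symm⟩
      exact ⟨Fin.last _, by simp, by simp [hz']⟩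
    · have hx' : x ∈ vertexBoundary G X := ⟨hx, z, hy, hxz⟩
      exact ⟨Fin.last _, by simp [hx'], by simp⟩
    · obtain ⟨i, hxi, hzi⟩ := hedge hxz hx hz
      exact ⟨i.castSucc, by simpa using hxi, by simpa using hzi⟩
  · intro x i j l hij hjl hi hl
    cases j using Fin.lastCases with
    | last => rwa [Fin.last_le_iff.1 hjl] at hl
    | cast j =>
      obtain ⟨i, rfl⟩ := Fin.exists_castSucc_eq.2 (hij.trans_lt j.castSucc_lt_last).ne
      rw [Fin.snoc_castSucc] at hi ⊢
      cases l using Fin.lastCases with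
      | cast l =>
        rw [Fin.snoc_castSucc] at hl
        exact hconv x i j l hij hjl hi hl
      | last =>
        rw [Fin.snoc_last] at hl
        have hxy : x ≠ y := ne_of_mem_of_not_mem (hsub i hi) hy
        exact hconv x i j (Fin.last p) hij j.le_last hi (hlast (hl.resolve_left hxy))

/-- `G[X]` can be swept by a path decomposition with bags of size at most `N` whose last bag
contains the boundary of `X`, so that the sweep may go on outside `X`. There is at least one bag,
possibly empty. -/
def Sweepable (G : SimpleGraph V) (N : ℕ) (X : Set V) : Prop :=
  ∃ p, ∃ B : Fin (p + 1) → Set V, IsPathDecompOn G X (p + 1) B ∧ (∀ i, (B i).ncard ≤ N) ∧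
    vertexBoundary G X ⊆ B (Fin.last p)

lemma sweepable_empty (G : SimpleGraph V) (N : ℕ) : Sweepable G N ∅ :=
  ⟨0, fun _ => ∅, ⟨fun _ => subset_rfl, fun _ h => h.elim, fun _ _ _ h => h.elim,
    fun _ _ _ _ _ _ h => h.elim⟩, fun _ => by simp, vertexBoundary_subset⟩

lemma Sweepable.insert [Finite V] (hX : Sweepable G N X) (hy : y ∉ X)
    (hN : (vertexBoundary G X).ncard < N) : Sweepable G N (insert y X) := by
  obtain ⟨p, B, hB, hcard, hlast⟩ := hX
  refine ⟨p + 1, _, hB.snoc hy hlast, fun i => ?_, ?_⟩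
  · cases i using Fin.lastCases with
    | last => simpa only [Fin.snoc_last] using (ncard_insert_le _ _).trans hN
    | cast i => simpa only [Fin.snoc_castSucc] using hcard i
  · rw [Fin.snoc_last]
    exact vertexBoundary_insert_subset G X y

lemma Sweepable.of_linked [Finite V] (hXY : Linked G X Y) (hY : Sweepable G N Y) :
    Sweepable G N X := by
  obtain ⟨P, hP⟩ := hXY
  obtain ⟨p, B, hB, hcard, hlast⟩ := hY
  refine ⟨p, fun i => {x ∈ X | (P x ∩ B i).Nonempty}, ⟨fun i x hx => hx.1, ?_, ?_, ?_⟩, ?_, ?_⟩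
  · intro x hx
    obtain ⟨i, hi⟩ := hB.2.1 x (hP.subset x hx (hP.mem x hx))
    exact ⟨i, hx, x, hP.mem x hx, hi⟩
  · intro x z hxz hx hz
    obtain ⟨i, hxi, hzi⟩ :=
      hB.2.2.1 hxz (hP.subset x hx (hP.mem x hx)) (hP.subset z hz (hP.mem z hz))
    exact ⟨i, ⟨hx, x, hP.mem x hx, hxi⟩, hz, z, hP.mem z hz, hzi⟩
  · rintro x i j l hij hjl ⟨hx, hi⟩ ⟨-, hl⟩
    exact ⟨hx, hB.inter_nonempty_of_connected (hP.connected x hx) (hP.subset x hx) hij hjl hi hl⟩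
  · intro i
    choose! g hg using fun x (hx : (P x ∩ B i).Nonempty) => hx
    refine (ncard_le_ncard_of_injOn g (fun x hx => (hg x hx.2).2) ?_).trans (hcard i)
    intro x hx z hz hxz
    exact hP.disjoint.elim_set hx.1 hz.1 (g x) (hg x hx.2).1 (hxz ▸ (hg z hz.2).1)
  · exact fun x hx => ⟨hx.1, (hP.boundary x hx).mono (inter_subset_inter_right _ hlast)⟩

lemma Sweepable.pathwidth_lt [Finite V] [Nonempty V] (h : Sweepable G N univ) :
    pathwidth G < N := by
  obtain ⟨p, B, hB, hcard, -⟩ := h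
  obtain ⟨i, hi⟩ := hB.2.1 (Classical.arbitrary V) trivial
  have hN : 0 < N := ((ncard_pos (toFinite _)).2 ⟨_, hi⟩).trans_le (hcard i)
  refine Nat.lt_of_le_sub_one hN (Nat.sInf_le ⟨p + 1, B, hB, fun j => ?_⟩)
  rw [Nat.sub_add_cancel hN]
  exact hcard j

lemma linked_of_sweepable_of_forall_ncard_vertexBoundary_le [Finite V] (hXY : X ⊆ Y)
    (hY : Sweepable G N Y)
    (hmin : ∀ Z, X ⊆ Z → Sweepable G N Z →
      (vertexBoundary G X).ncard ≤ (vertexBoundary G Z).ncard) :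
    Linked G X Y := by
  refine linked_of_forall_ncard_vertexBoundary_le G hXY fun W hXW hWY => ?_
  obtain ⟨Z, ⟨hXZ, hZY⟩, hZ⟩ := exists_min_image (Icc X Y) (fun Z => (vertexBoundary G Z).ncard)
    (toFinite _) ⟨X, left_mem_Icc.2 hXY⟩
  have hZ_linked : Linked G Z Y := linked_of_forall_ncard_vertexBoundary_le G hZY
    fun W hZW hWY => hZ W ⟨hXZ.trans hZW, hWY⟩
  exact (hmin Z hXZ (.of_linked hZ_linked hY)).trans (hZ W ⟨hXW, hWY⟩)

/-- `X` is maximal among the sweepable sets with at most `m` boundary vertices. -/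
def IsMaximalSweep (G : SimpleGraph V) (N m : ℕ) (X : Set V) : Prop :=
  Maximal (fun Z => Sweepable G N Z ∧ (vertexBoundary G Z).ncard ≤ m) X

lemma IsMaximalSweep.lt_ncard_vertexBoundary {m : ℕ} (hX : IsMaximalSweep G N m X)
    (hY : Sweepable G N Y) (hXY : X ⊂ Y) : m < (vertexBoundary G Y).ncard :=
  not_le.1 fun hle => hXY.not_subset (hX.2 ⟨hY, hle⟩ hXY.subset)

lemma exists_isMaximalSweep_superset [Finite V] {m : ℕ} (hX : Sweepable G N X)
    (hm : (vertexBoundary G X).ncard ≤ m) : ∃ Y, X ⊆ Y ∧ IsMaximalSweep G N m Y :=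
  Finite.exists_le_maximal
    (p := fun Z => Sweepable G N Z ∧ (vertexBoundary G Z).ncard ≤ m) ⟨hX, hm⟩

lemma IsMaximalSweep.exists_linked_insert [Finite V] {m : ℕ} (hX : IsMaximalSweep G N m X)
    (hm : m < N) (hy : y ∉ X) :
    vertexBoundary G (insert y X) = insert y (vertexBoundary G X) ∧
      ∃ Y, IsMaximalSweep G N (m + 1) Y ∧ Linked G (insert y X) Y := by
  obtain ⟨hsweep, hcard⟩ := hX.1
  have hsweep' := hsweep.insert hy (hcard.trans_lt hm)
  have hcard' : (insert y (vertexBoundary G X)).ncard ≤ m + 1 :=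
    (ncard_insert_le _ _).trans (Nat.succ_le_succ hcard)
  have hlt : ∀ Z, insert y X ⊆ Z → Sweepable G N Z → m < (vertexBoundary G Z).ncard :=
    fun Z hXZ hZ => hX.lt_ncard_vertexBoundary hZ ((ssubset_insert hy).trans_subset hXZ)
  have hbd : vertexBoundary G (insert y X) = insert y (vertexBoundary G X) :=
    eq_of_subset_of_ncard_le (vertexBoundary_insert_subset G X y)
      (hcard'.trans (hlt _ subset_rfl hsweep'))
  obtain ⟨Y, hXY, hY⟩ := exists_isMaximalSweep_superset hsweep' (hbd ▸ hcard')
  refine ⟨hbd, Y, hY, linked_of_sweepable_of_forall_ncard_vertexBoundary_le hXY hY.1.1 ?_⟩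
  exact fun Z hXZ hZ => (hbd ▸ hcard').trans (hlt Z hXZ hZ)

end Sweeps

section Acyclic

variable {U : Type*} {F T : SimpleGraph U}

lemma subsingleton_setOf_adj_and_dist_le (hT : T.IsTree) (v x : U) :
    {y | T.Adj x y ∧ T.dist v y ≤ T.dist v x}.Subsingleton := by
  have closer {y : U} (hxy : T.Adj x y) (hle : T.dist v y ≤ T.dist v x) :
      ∃ p : T.Walk v x, p.IsPath ∧ p.penultimate = y := by
    obtain ⟨q, hq⟩ := hT.connected.exists_walk_length_eq_dist v y
    refine ⟨q.concat hxy.symm, Walk.isPath_of_length_eq_dist _ ?_, q.penultimate_concat _⟩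
    rw [Walk.length_concat, hq]
    have := hT.dist_ne_of_adj v hxy
    have := hT.dist_eq_dist_add_one_of_adj v hxy
    omega
  rintro y ⟨hxy, hy⟩ z ⟨hxz, hz⟩
  obtain ⟨p, hp, rfl⟩ := closer hxy hy
  obtain ⟨q, hq, rfl⟩ := closer hxz hz
  have := hT.isAcyclic.subsingleton_path v x
  exact congrArg (fun p : T.Path v x => p.1.penultimate) (Subsingleton.elim ⟨p, hp⟩ ⟨q, hq⟩)

lemma isAcyclic_of_forall_subsingleton {α : Type*} [LinearOrder α] (r : U → α)
    (hr : ∀ x, {y | F.Adj x y ∧ r y ≤ r x}.Subsingleton) : F.IsAcyclic := by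
  classical
  intro u c hc
  obtain ⟨x, hx, hmax⟩ := c.support.toFinset.exists_max_image r ⟨u, by simp⟩
  rw [List.mem_toFinset] at hx
  have hc' := hc.rotate hx
  have hle : ∀ y ∈ (c.rotate x hx).support, r y ≤ r x := fun y hy =>
    hmax y (List.mem_toFinset.2 ((c.mem_support_rotate_iff x hx).1 hy))
  refine hc'.snd_ne_penultimate (hr x ⟨?_, hle _ ?_⟩ ⟨?_, hle _ ?_⟩)
  · exact Walk.adj_snd hc'.not_nil
  · exact Walk.getVert_mem_support ..
  · exact (Walk.adj_penultimate hc'.not_nil).symm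
  · exact Walk.getVert_mem_support ..

lemma exists_subsingleton_neighborSet_inter (hF : F.IsAcyclic) {S : Set U} (hS : S.Finite)
    (hne : S.Nonempty) : ∃ u ∈ S, (F.neighborSet u ∩ S).Subsingleton := by
  have hU : Nonempty U := hne.to_type
  obtain ⟨T, hFT, -, hT⟩ := connected_top.exists_isTree_le_of_le_of_isAcyclic le_top hF
  obtain ⟨v⟩ := hU
  obtain ⟨u, hu, hmax⟩ := exists_max_image S (T.dist v) hS hne
  exact ⟨u, hu, (subsingleton_setOf_adj_and_dist_le hT v u).anti
    fun y ⟨huy, hy⟩ => ⟨hFT huy, hmax y hy⟩⟩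

end Acyclic

section ForestMinors

variable {V U : Type*} {G : SimpleGraph V} {F H : SimpleGraph U} {N : ℕ} {S : Set U} {X Y : Set V}
  {f : U → Set V} {u : U} {y : V}

/-- A partial model inside `X`, each of whose branch sets meets the boundary of `X` and can
therefore be given new neighbours outside `X`. -/
structure IsFrontierModel (G : SimpleGraph V) (H : SimpleGraph U) (S : Set U) (X : Set V)
    (f : U → Set V) : Prop extends IsModelOn G H S f where
  subset : ∀ q ∈ S, f q ⊆ X
  boundary : ∀ q ∈ S, (f q ∩ vertexBoundary G X).Nonempty

lemma IsFrontierModel.exists_isModelOn_insert [DecidableEq U] (hf : IsFrontierModel G H S X f)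
    (hX : X ≠ univ) (hu : u ∉ S) (hleaf : (H.neighborSet u ∩ S).Subsingleton) :
    ∃ y ∉ X, IsModelOn G H (insert u S) (Function.update f u {y}) := by
  obtain ⟨y, hy, hadj⟩ : ∃ y ∉ X, ∀ q ∈ S, H.Adj q u → ∃ a ∈ f q, G.Adj a y := by
    obtain hnone | ⟨q, huq, hq⟩ := (H.neighborSet u ∩ S).eq_empty_or_nonempty
    · obtain ⟨y, hy⟩ := (ne_univ_iff_exists_notMem X).1 hX
      exact ⟨y, hy, fun q hq hqu => (hnone.subset ⟨hqu.symm, hq⟩).elim⟩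
    · obtain ⟨a, ha, -, y, hy, hay⟩ := hf.boundary q hq
      refine ⟨y, hy, fun q' hq' hqu' => ⟨a, ?_, hay⟩⟩
      rwa [hleaf ⟨hqu'.symm, hq'⟩ ⟨huq, hq⟩]
  refine ⟨y, hy, hf.toIsModelOn.insert_update hu (connected_induce_singleton G y)
    (fun q hq => disjoint_singleton_right.2 fun h => hy (hf.subset q hq h)) fun q hq hqu => ?_⟩
  obtain ⟨a, ha, hay⟩ := hadj q hq hqu
  exact ⟨a, ha, y, rfl, hay⟩

lemma IsFrontierModel.insert_update [DecidableEq U] (hf : IsFrontierModel G H S X f) (hu : u ∉ S)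
    (hmodel : IsModelOn G H (insert u S) (Function.update f u {y}))
    (hbd : vertexBoundary G (insert y X) = insert y (vertexBoundary G X)) :
    IsFrontierModel G H (insert u S) (insert y X) (Function.update f u {y}) where
  toIsModelOn := hmodel
  subset := by
    rintro q (rfl | hq)
    · simp
    · rw [Function.update_of_ne (ne_of_mem_of_not_mem hq hu)]
      exact (hf.subset q hq).trans (subset_insert y X)
  boundary := by
    rw [hbd]
    rintro q (rfl | hq)
    · simp
    · rw [Function.update_of_ne (ne_of_mem_of_not_mem hq hu)]
      exact (hf.boundary q hq).mono (inter_subset_inter_right _ (subset_insert y _))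

lemma IsFrontierModel.of_linked (hf : IsFrontierModel G H S X f) (hXY : Linked G X Y) :
    ∃ g, IsFrontierModel G H S Y g := by
  obtain ⟨P, hP⟩ := hXY
  refine ⟨_, hf.toIsModelOn.biUnion hP hf.subset, fun q hq => ?_, fun q hq => ?_⟩
  · exact iUnion₂_subset fun x hx => hP.subset x (hf.subset q hq hx)
  · obtain ⟨x, hxq, hx⟩ := hf.boundary q hq
    exact (hP.boundary x hx).mono (inter_subset_inter_left _ (subset_biUnion_of_mem hxq))

theorem exists_isFrontierModel [Finite V] (hF : F.IsAcyclic) (hG : ¬ Sweepable G N univ)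
    (hS : S.Finite) (hN : S.ncard ≤ N) :
    ∃ X f, IsFrontierModel G F S X f ∧ IsMaximalSweep G N S.ncard X := by
  classical
  induction hn : S.ncard generalizing S with
  | zero =>
    obtain rfl := (ncard_eq_zero hS).1 hn
    obtain ⟨X, -, hX⟩ := exists_isMaximalSweep_superset (m := 0) (sweepable_empty G N)
      (by simp [subset_empty_iff.1 (vertexBoundary_subset (G := G) (X := ∅))])
    exact ⟨X, fun _ => ∅, ⟨⟨by simp, by simp, by simp⟩, by simp, by simp⟩, hX⟩
  | succ n ih =>
    obtain ⟨u, huS, hleaf⟩ := exists_subsingleton_neighborSet_inter hF hS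
      (nonempty_of_ncard_ne_zero (hn ▸ n.succ_ne_zero))
    have hcard : (S \ {u}).ncard = n := by
      rw [ncard_sdiff_singleton_of_mem huS, hn, Nat.add_sub_cancel]
    have hu : u ∉ S \ {u} := fun h => h.2 rfl
    obtain ⟨X, f, hf, hX⟩ := ih (S := S \ {u}) hS.sdiff (by omega) hcard
    have hX_ne : X ≠ univ := fun h => hG (h ▸ hX.1.1)
    obtain ⟨y, hy, hmodel⟩ := hf.exists_isModelOn_insert hX_ne hu
      (hleaf.anti (inter_subset_inter_right _ sdiff_subset))
    obtain ⟨hbd, Y, hY, hlink⟩ := hX.exists_linked_insert (by omega) hy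
    obtain ⟨g, hg⟩ := (hf.insert_update hu hmodel hbd).of_linked hlink
    rw [insert_sdiff_self_of_mem huS] at hg
    exact ⟨Y, g, hg, hY⟩

theorem hasMinor_of_isAcyclic [Finite V] [Nonempty V] [Finite U] (hF : F.IsAcyclic)
    (hcard : Nat.card U ≤ pathwidth G + 1) : HasMinor G F := by
  classical
  rw [hasMinor_iff_exists_isModelOn_univ]
  obtain hU | hU := isEmpty_or_nonempty U
  · exact ⟨fun _ => ∅, fun u => isEmptyElim u, fun u => isEmptyElim u, fun u => isEmptyElim u⟩
  have hG : ¬ Sweepable G (pathwidth G) univ := fun h => h.pathwidth_lt.false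
  obtain ⟨u, -, hleaf⟩ := exists_subsingleton_neighborSet_inter hF finite_univ univ_nonempty
  have hS : ({u}ᶜ : Set U).ncard ≤ pathwidth G := by
    rw [ncard_compl, ncard_singleton]
    omega
  obtain ⟨X, f, hf, hX⟩ := exists_isFrontierModel hF hG (toFinite {u}ᶜ) hS
  obtain ⟨y, -, hmodel⟩ := hf.exists_isModelOn_insert (fun h => hG (h ▸ hX.1.1)) (by simp)
    (hleaf.anti (inter_subset_inter_right _ (subset_univ _)))
  refine ⟨_, hmodel.mono fun q _ => em (q = u)⟩

end ForestMinors

section RootedMinors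

variable {V W : Type*} {G : SimpleGraph V} {T : SimpleGraph W} {v : W} {w : V}

lemma hasRootedMinor_iff_exists_isModelOn_univ :
    HasRootedMinor G w T v ↔ ∃ f, w ∈ f v ∧ IsModelOn G T univ f := by
  constructor
  · rintro ⟨f, hw, hconn, hdisj, hadj⟩
    exact ⟨f, hw, fun u _ => hconn u, pairwise_univ.2 hdisj, fun _ _ _ _ h => hadj h⟩
  · rintro ⟨f, hw, hf⟩
    exact ⟨f, hw, fun u => hf.connected u trivial, pairwise_univ.1 hf.disjoint,
      fun u u' h => hf.adj u trivial u' trivial h⟩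

lemma IsModelOn.hasRootedMinor {f : W → Set V} {R : Set V} (hf : IsModelOn G T univ f)
    (hR : (G.induce R).Connected) (hw : w ∈ R) (hv : f v ⊆ R)
    (hdisj : ∀ q ≠ v, Disjoint (f q) R) : HasRootedMinor G w T v := by
  classical
  have hmodel : IsModelOn G T (insert v {v}ᶜ) (Function.update f v R) := by
    refine (hf.mono (subset_univ _)).insert_update (by simp) hR hdisj fun q _ hqv => ?_
    obtain ⟨a, ha, b, hb, hab⟩ := hf.adj q trivial v trivial hqv
    exact ⟨a, ha, b, hv hb, hab⟩
  refine hasRootedMinor_iff_exists_isModelOn_univ.2 ⟨_, ?_, hmodel.mono fun q _ => em (q = v)⟩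
  rwa [Function.update_self]

lemma HasRootedMinor.mono_right {T' : SimpleGraph W} (h : HasRootedMinor G w T' v)
    (hT : T ≤ T') : HasRootedMinor G w T v := by
  obtain ⟨f, hw, hconn, hdisj, hadj⟩ := h
  exact ⟨f, hw, hconn, hdisj, fun _ _ hxy => hadj (hT hxy)⟩

/-- The vertices of two copies of `W` glued at `v`: the common vertex is `none`, and the Boolean
tells the two copies apart. -/
abbrev RootDoubleVert (v : W) : Type _ := Option ({x // x ≠ v} × Bool)

namespace RootDoubleVert

/-- The projection of the two copies of `W` onto `W`. -/
def proj : RootDoubleVert v → W := fun p => p.elim v fun a => a.1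

open Classical in
/-- The inclusion of the copy of `W` with index `b`. -/
noncomputable def copy (v : W) (b : Bool) (x : W) : RootDoubleVert v :=
  if h : x = v then none else some (⟨x, h⟩, b)

lemma copy_self (b : Bool) : copy v b v = none := dif_pos rfl

lemma copy_of_ne (b : Bool) {x : W} (h : x ≠ v) : copy v b x = some (⟨x, h⟩, b) := dif_neg h

lemma proj_copy (b : Bool) (x : W) : proj (copy v b x) = x := by
  obtain rfl | h := eq_or_ne x v
  · rw [copy_self]
    rfl
  · rw [copy_of_ne b h]
    rfl

lemma exists_copy_eq (p : RootDoubleVert v) : ∃ b x, copy v b x = p := by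
  obtain _ | ⟨⟨x, hx⟩, b⟩ := p
  · exact ⟨true, v, copy_self true⟩
  · exact ⟨b, x, copy_of_ne b hx⟩

lemma copy_not_ne_copy {b : Bool} {x y : W} (hy : y ≠ v) : copy v (!b) y ≠ copy v b x := by
  rw [copy_of_ne _ hy]
  obtain rfl | hx := eq_or_ne x v
  · simp [copy_self]
  · simp [copy_of_ne b hx]

lemma natCard_eq [Finite W] (v : W) : Nat.card (RootDoubleVert v) = 2 * Nat.card W - 1 := by
  classical
  have hW : Nat.card {x // x ≠ v} + 1 = Nat.card W :=
    Finite.card_option.symm.trans (Nat.card_congr (Equiv.optionSubtypeNe v))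
  rw [Finite.card_option, Nat.card_prod, Nat.card_eq_fintype_card (α := Bool), Fintype.card_bool]
  omega

end RootDoubleVert

open RootDoubleVert

/-- Two copies of `T` glued at `v`: an edge of `T` is lifted to each copy separately. -/
def rootDouble (T : SimpleGraph W) (v : W) : SimpleGraph (RootDoubleVert v) where
  Adj p q := T.Adj p.proj q.proj ∧ ∀ a ∈ p, ∀ b ∈ q, a.2 = b.2
  symm := ⟨fun _ _ ⟨h, heq⟩ => ⟨h.symm, fun a ha b hb => (heq b hb a ha).symm⟩⟩
  loopless := ⟨fun _ h => T.irrefl h.1⟩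

namespace rootDouble

lemma adj_copy (b : Bool) {x y : W} (h : T.Adj x y) :
    (rootDouble T v).Adj (RootDoubleVert.copy v b x) (RootDoubleVert.copy v b y) := by
  refine ⟨by simpa only [proj_copy] using h, ?_⟩
  by_cases hx : x = v <;> by_cases hy : y = v <;> simp [RootDoubleVert.copy, hx, hy]

/-- The `b`-th copy of `T` in `rootDouble T v`. -/
noncomputable def copy (T : SimpleGraph W) (v : W) (b : Bool) : Copy T (rootDouble T v) :=
  ⟨⟨RootDoubleVert.copy v b, adj_copy b⟩, Function.LeftInverse.injective (proj_copy b)⟩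

protected lemma isAcyclic (hT : T.IsTree) (v : W) : (rootDouble T v).IsAcyclic := by
  refine isAcyclic_of_forall_subsingleton (fun p => T.dist v p.proj) fun p => ?_
  rintro q ⟨⟨hpq, hsheet⟩, hq⟩ q' ⟨⟨hpq', hsheet'⟩, hq'⟩
  have hproj : q.proj = q'.proj :=
    subsingleton_setOf_adj_and_dist_le hT v p.proj ⟨hpq, hq⟩ ⟨hpq', hq'⟩
  obtain _ | ⟨x, b⟩ := p
  · have hvq : T.dist v q.proj = 0 := Nat.le_zero.1 (hq.trans_eq dist_self)
    exact absurd (hT.connected.dist_eq_zero_iff.1 hvq) hpq.ne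
  obtain _ | ⟨y, c⟩ := q <;> obtain _ | ⟨y', c'⟩ := q'
  · rfl
  · exact absurd hproj.symm y'.2
  · exact absurd hproj y.2
  · have hc : b = c := hsheet (x, b) rfl (y, c) rfl
    have hc' : b = c' := hsheet' (x, b) rfl (y', c') rfl
    rw [← hc, ← hc', show y = y' from Subtype.ext hproj]

end rootDouble

theorem hasRootedMinor_of_hasMinor_rootDouble (hT : T.Connected) (hG : G.Connected) (w : V)
    (h : HasMinor G (rootDouble T v)) : HasRootedMinor G w T v := by
  obtain ⟨f, hf⟩ := hasMinor_iff_exists_isModelOn_univ.1 h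
  obtain ⟨P, hwP, hP, z, hPz⟩ := exists_connected_induce_inter_eq_singleton hG w
    (nonempty_iUnion.2 ⟨none, nonempty_coe_sort.1 (hf.connected none trivial).nonempty⟩)
  obtain ⟨hzP, hz⟩ : z ∈ P ∩ ⋃ p, f p := hPz ▸ rfl
  obtain ⟨p, hzp⟩ := mem_iUnion.1 hz
  obtain ⟨b, x, rfl⟩ := exists_copy_eq p
  have hC := (hf.comp (rootDouble.copy T v b)).connected_induce_iUnion hT
  have hPC := induce_union_connected hP.preconnected hC.preconnected
    ⟨z, hzP, mem_iUnion_of_mem x hzp⟩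
  refine (hf.comp (rootDouble.copy T v !b)).hasRootedMinor hPC (Or.inl hwP) ?_ fun q hq => ?_
  · refine (Subset.trans ?_ (subset_iUnion _ v)).trans subset_union_right
    exact (congrArg f ((copy_self !b).trans (copy_self b).symm)).subset
  · refine Set.disjoint_left.2 fun y hyq hy => ?_
    obtain ⟨x', hyx'⟩ : ∃ x', y ∈ f (RootDoubleVert.copy v b x') := by
      refine hy.elim (fun hyP => ⟨x, ?_⟩) mem_iUnion.1
      obtain rfl : y = z := hPz.subset ⟨hyP, mem_iUnion_of_mem _ hyq⟩
      exact hzp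
    exact copy_not_ne_copy hq (hf.disjoint.elim_set trivial trivial y hyq hyx')

end RootedMinors

theorem rooted_tree_minor_of_pathwidth_general {V W : Type*} [Finite V] [Finite W]
    (T : SimpleGraph W) (hT : T.IsAcyclic) (v : W) (t : ℕ) (ht : Nat.card W = t)
    (G : SimpleGraph V) (w : V) (hG : G.Connected) (hpw : 2 * t - 2 ≤ pathwidth G) :
    HasRootedMinor G w T v := by
  have hV : Nonempty V := ⟨w⟩
  have hW : Nonempty W := ⟨v⟩
  obtain ⟨T', hTT', -, hT'⟩ := connected_top.exists_isTree_le_of_le_of_isAcyclic le_top hT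
  have hcard : Nat.card (RootDoubleVert v) ≤ pathwidth G + 1 := by
    rw [RootDoubleVert.natCard_eq, ht]
    omega
  have hminor := hasMinor_of_isAcyclic (rootDouble.isAcyclic hT' v) hcard
  exact (hasRootedMinor_of_hasMinor_rootDouble hT'.connected hG w hminor).mono_right hTT'

/-- If `(T, v)` is a rooted tree on `t` vertices and `(G, w)` is a connected rooted graph
with pathwidth at least `2t - 2`, then `(G, w)` contains `(T, v)` as a rooted minor. -/
theorem rooted_tree_minor_of_pathwidth {V W : Type} [Fintype V] [Fintype W]
    (T : SimpleGraph W) (hT : T.IsTree) (v : W) (t : ℕ) (ht : Fintype.card W = t)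
    (G : SimpleGraph V) (w : V) (hG : G.Connected)
    (hpw : 2 * t - 2 ≤ pathwidth G) :
    HasRootedMinor G w T v :=
  rooted_tree_minor_of_pathwidth_general T hT.isAcyclic v t (Nat.card_eq_fintype_card.trans ht) G w
    hG hpw
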